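/- Let μ ∈ ℂ∖{0}, a ∈ ℂ∖{0}, and let (n_k) and (m_k) be strictly increasing sequences of positive integers such that m₁|a| > 2 and the closed disks D(−m_j a, j) and D(−m_k a, k) are disjoint for every j ≠ k. Then there exists a non-increasing sequence (M_k)_{k≥1} of closed infinite-dimensional linear subspaces of H(ℂ) such that for every j ≥ 1 there exists a continuous norm q_j on H(ℂ) satisfying: for every k ≥ j and every f ∈ M_k, p_j((μD)^{n_k} f) ≤ q_j(f) and p_j(T_a^{m_k} f) ≤ q_j(f). -/

import Mathlib

/-!
Let `b` be the unimodular number with `b * a = ‖a‖` and `E z = exp (-b z)`. The space `M k` consists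
of the functions `F ∘ E`, with `F` entire, whose Taylor coefficients at `0` vanish outside the set
`freqSet μ n k` of those `s` with `(‖μ‖ s) ^ n i ≤ exp s` for every `i ≤ k`. This set decreases with
`k` and is cofinite, so `M k` contains infinitely many of the linearly independent characters `E ^ s`.

Every `w` with `‖w‖ = exp R`, `R ≥ 0`, is `E z` for some `z` with `‖z‖ ≤ R + π`, so the maximum principle
bounds `F` on the disk of radius `exp R` by `p_{R+4} (F ∘ E)` (`norm_le_pnorm_comp_expMap`). This
yields everything:

* a limit in `H(ℂ)` of functions `F_i ∘ E` comes from a locally uniform limit of the `F_i`, so `M k`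
  is closed;
* `T_a` multiplies `E` by `exp (-‖a‖) < 1`, so all the powers of `T_a` are bounded by `p_{j+4}`;
* Cauchy's estimates give `‖c s‖ exp (s (j + 2)) ≤ p_{j+6} (F ∘ E)` for the Taylor coefficients `c` of
  `F`, while `(μ D) ^ n k` multiplies `c s` by a number of modulus `(‖μ‖ s) ^ n k ≤ exp s`; this leaves
  a geometric series.

Thus `q_j = 2 p_{j+6}` works.
-/

open Filter Metric Set

noncomputable def pnorm (j : ℝ) (f : ℂ → ℂ) : ℝ :=
  sSup ((fun z => ‖f z‖) '' Metric.closedBall (0 : ℂ) j)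

/-- Convergence in `H(ℂ)`, i.e. uniform convergence on every compact subset of `ℂ`. -/
def TendstoH (F : ℕ → ℂ → ℂ) (f : ℂ → ℂ) : Prop :=
  ∀ j : ℕ, 1 ≤ j → Filter.Tendsto (fun k => pnorm j (F k - f)) Filter.atTop (nhds 0)

/-- A set of entire functions is dense in `H(ℂ)`. -/
def DenseH (S : Set (ℂ → ℂ)) : Prop :=
  ∀ f : ℂ → ℂ, Differentiable ℂ f → ∀ j : ℕ, 1 ≤ j → ∀ ε : ℝ, 0 < ε →
    ∃ g ∈ S, pnorm j (g - f) < ε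

/-- A set of entire functions is (sequentially) closed in `H(ℂ)`. -/
def ClosedH (M : Set (ℂ → ℂ)) : Prop :=
  ∀ (F : ℕ → ℂ → ℂ) (f : ℂ → ℂ), (∀ k, F k ∈ M) → Differentiable ℂ f →
    TendstoH F f → f ∈ M

/-- The operator `μ D`, `f ↦ μ f'`. -/
noncomputable def derivOp (μ : ℂ) : (ℂ → ℂ) → ℂ → ℂ := fun f z => μ * deriv f z

/-- The operator `μ T_a`, `f ↦ μ f(· + a)`. -/
def transOp (μ a : ℂ) : (ℂ → ℂ) → ℂ → ℂ := fun f z => μ * f (z + a)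

/-- The translation operator `T_a`, `f ↦ f(· + a)`. -/
def translOp (a : ℂ) : (ℂ → ℂ) → ℂ → ℂ := fun f z => f (z + a)

/-- `f` has dense orbit under `S` in `H(ℂ)`. -/
def HypercyclicFor (S : (ℂ → ℂ) → ℂ → ℂ) (f : ℂ → ℂ) : Prop :=
  ∀ g : ℂ → ℂ, Differentiable ℂ g → ∀ j : ℕ, 1 ≤ j → ∀ ε : ℝ, 0 < ε →
    ∃ n : ℕ, pnorm j (S^[n] f - g) < ε

/-- `M` is a closed infinite-dimensional subspace of `H(ℂ)`. -/
def IsClosedInfDimSubspaceH (M : Submodule ℂ (ℂ → ℂ)) : Prop :=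
  (∀ f ∈ M, Differentiable ℂ f) ∧ ClosedH (M : Set (ℂ → ℂ)) ∧ ¬ FiniteDimensional ℂ M

/-- `a` does not belong to the arc `{e^{iα} : α ∈ (-θ, θ)}` of the unit circle. -/
def OutsideArc (θ : ℝ) (a : ℂ) : Prop :=
  ∀ α : ℝ, -θ < α → α < θ → a ≠ Complex.exp (α * Complex.I)

/-- A sequence `(n_k)_{k ≥ 1}` of positive integers is `φ`-increasing. -/
def PhiIncreasing (φ : ℕ → ℕ) (n : ℕ → ℕ) : Prop :=
  (∀ k, 1 ≤ k → 1 ≤ n k) ∧ ∀ k, 1 ≤ k → n k + φ (n k) < n (k + 1)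

/-- `q` is a continuous seminorm on `H(ℂ)`. -/
def IsContinuousSeminormH (q : (ℂ → ℂ) → ℝ) : Prop :=
  (∀ f g : ℂ → ℂ, Differentiable ℂ f → Differentiable ℂ g → q (f + g) ≤ q f + q g) ∧
  (∀ (c : ℂ) (f : ℂ → ℂ), Differentiable ℂ f → q (c • f) = ‖c‖ * q f) ∧
  (∃ (C : ℝ) (i : ℕ), 0 < C ∧ 1 ≤ i ∧ ∀ f : ℂ → ℂ, Differentiable ℂ f → q f ≤ C * pnorm i f)

/-- `q` is a continuous norm on `H(ℂ)`. -/
def IsContinuousNormH (q : (ℂ → ℂ) → ℝ) : Prop :=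
  IsContinuousSeminormH q ∧ ∀ f : ℂ → ℂ, Differentiable ℂ f → q f = 0 → f = 0

/-! ### The seminorms `p_j` -/

lemma bddAbove_norm_image {f : ℂ → ℂ} (hf : Differentiable ℂ f) (j : ℝ) :
    BddAbove ((fun z => ‖f z‖) '' closedBall (0 : ℂ) j) :=
  (isCompact_closedBall (0 : ℂ) j).bddAbove_image hf.continuous.norm.continuousOn

lemma norm_le_pnorm {f : ℂ → ℂ} (hf : Differentiable ℂ f) {j : ℝ} {z : ℂ} (hz : ‖z‖ ≤ j) :
    ‖f z‖ ≤ pnorm j f :=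
  le_csSup (bddAbove_norm_image hf j) ⟨z, by simpa using hz, rfl⟩

lemma pnorm_le {f : ℂ → ℂ} {j C : ℝ} (hj : 0 ≤ j) (h : ∀ z, ‖z‖ ≤ j → ‖f z‖ ≤ C) :
    pnorm j f ≤ C := by
  refine csSup_le ((nonempty_closedBall.2 hj).image _) ?_
  rintro _ ⟨z, hz, rfl⟩
  exact h z (by simpa using hz)

lemma pnorm_nonneg (j : ℝ) (f : ℂ → ℂ) : 0 ≤ pnorm j f :=
  Real.sSup_nonneg (by rintro _ ⟨z, -, rfl⟩; exact norm_nonneg _)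

lemma pnorm_add_le {f g : ℂ → ℂ} (hf : Differentiable ℂ f) (hg : Differentiable ℂ g) {j : ℝ}
    (hj : 0 ≤ j) : pnorm j (f + g) ≤ pnorm j f + pnorm j g :=
  pnorm_le hj fun _ hz =>
    (norm_add_le _ _).trans (add_le_add (norm_le_pnorm hf hz) (norm_le_pnorm hg hz))

lemma pnorm_smul (c : ℂ) (f : ℂ → ℂ) (j : ℝ) : pnorm j (c • f) = ‖c‖ * pnorm j f := by
  unfold pnorm
  rw [← smul_eq_mul, ← Real.sSup_smul_of_nonneg (norm_nonneg c), ← image_smul, image_image]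
  simp

lemma pnorm_eq_zero {f : ℂ → ℂ} (hf : Differentiable ℂ f) {j : ℝ} (hj : 0 < j)
    (h : pnorm j f = 0) : f = 0 := by
  refine AnalyticOnNhd.eq_of_eventuallyEq (𝕜 := ℂ) (z₀ := 0)
    (fun z _ => hf.analyticAt z) (fun z _ => analyticAt_const) ?_
  filter_upwards [closedBall_mem_nhds (0 : ℂ) hj] with z hz
  have := norm_le_pnorm hf (j := j) (z := z) (by simpa using hz)
  rw [h] at this
  simpa using this

lemma isContinuousNormH_two_mul_pnorm {i : ℕ} (hi : 1 ≤ i) :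
    IsContinuousNormH fun f => 2 * pnorm i f := by
  have hi' : (0 : ℝ) < i := by exact_mod_cast hi
  refine ⟨⟨fun f g hf hg => ?_, fun c f _ => ?_, 2, i, two_pos, hi, fun f _ => le_rfl⟩,
    fun f hf h => pnorm_eq_zero hf hi' (by simpa using h)⟩
  · have := pnorm_add_le hf hg hi'.le
    linarith
  · simp only [pnorm_smul]
    ring

/-! ### The map `z ↦ exp (-b z)` -/

/-- The map `z ↦ exp (-b z)`. -/
noncomputable def expMap (b z : ℂ) : ℂ := Complex.exp (-(b * z))

lemma differentiable_expMap (b : ℂ) : Differentiable ℂ (expMap b) := by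
  unfold expMap
  fun_prop

lemma norm_expMap_le {b : ℂ} (hb : ‖b‖ = 1) {z : ℂ} {R : ℝ} (hz : ‖z‖ ≤ R) :
    ‖expMap b z‖ ≤ Real.exp R := by
  rw [expMap, Complex.norm_exp, Real.exp_le_exp]
  calc (-(b * z)).re ≤ ‖-(b * z)‖ := Complex.re_le_norm _
    _ = ‖z‖ := by rw [norm_neg, norm_mul, hb, one_mul]
    _ ≤ R := hz

/-- The preimage is `-b⁻¹ log w`, whose modulus is at most `|log ‖w‖| + π`. -/
lemma exists_expMap_eq {b : ℂ} (hb : ‖b‖ = 1) {w : ℂ} {R : ℝ} (hR : 0 ≤ R)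
    (hw : ‖w‖ = Real.exp R) : ∃ z, ‖z‖ ≤ R + 4 ∧ expMap b z = w := by
  have hb0 : b ≠ 0 := by rw [← norm_ne_zero_iff, hb]; exact one_ne_zero
  have hw0 : w ≠ 0 := by rw [← norm_ne_zero_iff, hw]; exact (Real.exp_pos R).ne'
  refine ⟨-(b⁻¹ * Complex.log w), ?_, ?_⟩
  · rw [norm_neg, norm_mul, norm_inv, hb, inv_one, one_mul]
    refine (Complex.norm_le_abs_re_add_abs_im _).trans ?_
    rw [Complex.log_re, Complex.log_im, hw, Real.log_exp, abs_of_nonneg hR]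
    have := Complex.abs_arg_le_pi w
    have := Real.pi_le_four
    linarith
  · rw [expMap, mul_neg, neg_neg, mul_inv_cancel_left₀ hb0, Complex.exp_log hw0]

lemma norm_le_pnorm_comp_expMap {b : ℂ} (hb : ‖b‖ = 1) {F : ℂ → ℂ} (hF : Differentiable ℂ F)
    {R : ℝ} (hR : 0 ≤ R) {w : ℂ} (hw : ‖w‖ ≤ Real.exp R) :
    ‖F w‖ ≤ pnorm (R + 4) (F ∘ expMap b) := by
  have hne : Real.exp R ≠ 0 := (Real.exp_pos R).ne'
  refine Complex.norm_le_of_forall_mem_frontier_norm_le (U := ball (0 : ℂ) (Real.exp R))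
    isBounded_ball hF.diffContOnCl (fun v hv => ?_) ?_
  · rw [frontier_ball _ hne, mem_sphere_zero_iff_norm] at hv
    obtain ⟨z, hz, rfl⟩ := exists_expMap_eq hb hR hv
    exact norm_le_pnorm (f := F ∘ expMap b) (hF.comp (differentiable_expMap b)) hz
  · rw [closure_ball _ hne]
    simpa using hw

lemma linearIndependent_expMap_pow {b : ℂ} (hb : b ≠ 0) :
    LinearIndependent ℂ fun (s : ℕ) (z : ℂ) => expMap b z ^ s := by
  let χ : ℕ → (Multiplicative ℂ →* ℂ) := fun s =>
    { toFun := fun z => expMap b z.toAdd ^ s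
      map_one' := by simp [expMap]
      map_mul' := fun x y => by
        rw [← mul_pow]
        simp [expMap, mul_add, Complex.exp_add, mul_comm] }
  have hχ : Function.Injective χ := by
    intro s t h
    have h1 := DFunLike.congr_fun h (Multiplicative.ofAdd (-b⁻¹))
    simp only [χ, MonoidHom.coe_mk, OneHom.coe_mk, toAdd_ofAdd, expMap, mul_neg, neg_neg,
      mul_inv_cancel₀ hb, ← Complex.exp_nat_mul, mul_one] at h1
    have h2 := congrArg norm h1
    simpa [Complex.norm_exp] using h2
  exact (linearIndependent_monoidHom (Multiplicative ℂ) ℂ).comp χ hχ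

/-! ### Taylor coefficients and termwise differentiation -/

/-- The `s`-th Taylor coefficient of `F` at `0`. -/
noncomputable def taylorCoeff (F : ℂ → ℂ) (s : ℕ) : ℂ := (s.factorial : ℂ)⁻¹ * iteratedDeriv s F 0

/-- Cauchy's estimate on the circle of radius `exp R`. -/
lemma norm_taylorCoeff_mul_le {F : ℂ → ℂ} (hF : Differentiable ℂ F) {R C : ℝ}
    (h : ∀ w, ‖w‖ ≤ Real.exp R → ‖F w‖ ≤ C) (s : ℕ) :
    ‖taylorCoeff F s‖ * Real.exp R ^ s ≤ C := by
  have h1 := Complex.norm_iteratedDeriv_le_of_forall_mem_sphere_norm_le (c := 0) (R := Real.exp R)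
    (C := C) (f := F) s (Real.exp_pos R) hF.diffContOnCl
    (fun w hw => h w (by rw [mem_sphere_zero_iff_norm] at hw; exact hw.le))
  have hpos : 0 < Real.exp R ^ s := pow_pos (Real.exp_pos R) s
  have hfac : (0 : ℝ) < s.factorial := by exact_mod_cast s.factorial_pos
  rw [le_div_iff₀ hpos] at h1
  rw [taylorCoeff, norm_mul, norm_inv, Complex.norm_natCast, mul_assoc, inv_mul_le_iff₀ hfac]
  exact h1

lemma norm_taylorCoeff_mul_le_pnorm {b : ℂ} (hb : ‖b‖ = 1) {F : ℂ → ℂ} (hF : Differentiable ℂ F)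
    {R : ℝ} (hR : 0 ≤ R) (s : ℕ) :
    ‖taylorCoeff F s‖ * Real.exp R ^ s ≤ pnorm (R + 4) (F ∘ expMap b) :=
  norm_taylorCoeff_mul_le hF (fun _ hw => norm_le_pnorm_comp_expMap hb hF hR hw) s

lemma exp_pow_le (R : ℝ) (s : ℕ) : Real.exp R ^ s ≤ (1 / 2) ^ s * Real.exp (R + 1) ^ s := by
  rw [← mul_pow]
  refine pow_le_pow_left₀ (Real.exp_pos R).le ?_ s
  have h2 : (2 : ℝ) ≤ Real.exp 1 := by have := Real.add_one_le_exp (1 : ℝ); linarith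
  rw [Real.exp_add]
  nlinarith [Real.exp_pos R]

lemma summable_taylorCoeff {b : ℂ} (hb : ‖b‖ = 1) {F : ℂ → ℂ} (hF : Differentiable ℂ F) (R : ℕ) :
    Summable fun s => ‖taylorCoeff F s‖ * Real.exp R ^ s := by
  refine Summable.of_nonneg_of_le (fun s => by positivity) (fun s => ?_)
    (summable_geometric_two.mul_right (pnorm ((R : ℝ) + 1 + 4) (F ∘ expMap b)))
  calc ‖taylorCoeff F s‖ * Real.exp R ^ s
      ≤ ‖taylorCoeff F s‖ * ((1 / 2) ^ s * Real.exp (R + 1) ^ s) := by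
        gcongr; exact exp_pow_le _ _
    _ = (1 / 2) ^ s * (‖taylorCoeff F s‖ * Real.exp (R + 1) ^ s) := by ring
    _ ≤ _ := by
        gcongr
        exact norm_taylorCoeff_mul_le_pnorm hb hF (by positivity) s

lemma comp_expMap_eq_tsum (b : ℂ) {F : ℂ → ℂ} (hF : Differentiable ℂ F) :
    F ∘ expMap b = fun z => ∑' s, taylorCoeff F s * expMap b z ^ s := by
  funext z
  have h := Complex.hasSum_taylorSeries_of_entire hF 0 (expMap b z)
  rw [Function.comp_apply, ← h.tsum_eq]
  refine tsum_congr fun s => ?_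
  simp only [smul_eq_mul, sub_zero, taylorCoeff]
  ring

lemma hasDerivAt_expMap_pow (b c : ℂ) (s : ℕ) (z : ℂ) :
    HasDerivAt (fun z => c * expMap b z ^ s) (c * (-(b * s)) * expMap b z ^ s) z := by
  have h : HasDerivAt (fun z => c * Complex.exp (s * -(b * z)))
      (c * (Complex.exp (s * -(b * z)) * (s * -(b * 1)))) z :=
    ((((hasDerivAt_id z).const_mul b).neg.const_mul (s : ℂ)).cexp).const_mul c
  simp only [expMap, ← Complex.exp_nat_mul]
  convert h using 1
  ring

lemma derivOp_tsum (μ : ℂ) {b : ℂ} (hb : ‖b‖ = 1) {c : ℕ → ℂ}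
    (hc : ∀ R : ℕ, Summable fun s => ‖c s‖ * Real.exp R ^ s) :
    derivOp μ (fun z => ∑' s, c s * expMap b z ^ s) =
      fun z => ∑' s, c s * (-(μ * b * s)) * expMap b z ^ s := by
  funext z
  obtain ⟨R, hR⟩ := exists_nat_gt ‖z‖
  have h := Complex.hasSum_deriv_of_summable_norm (U := ball (0 : ℂ) R) (z := z)
    (F := fun s z => c s * expMap b z ^ s) (hc R)
    (fun s => ((differentiable_expMap b).pow s |>.const_mul (c s)).differentiableOn) isOpen_ball
    (fun s w hw => by
      rw [norm_mul, norm_pow]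
      gcongr
      exact norm_expMap_le hb (by simpa using (mem_ball_zero_iff.1 hw).le))
    (by simpa using hR)
  rw [derivOp, ← (h.mul_left μ).tsum_eq]
  refine tsum_congr fun s => ?_
  rw [(hasDerivAt_expMap_pow b (c s) s z).deriv]
  ring

lemma summable_mul_freq (μ : ℂ) {b : ℂ} (hb : ‖b‖ = 1) {c : ℕ → ℂ}
    (hc : ∀ R : ℕ, Summable fun s => ‖c s‖ * Real.exp R ^ s) (R : ℕ) :
    Summable fun s => ‖c s * (-(μ * b * s))‖ * Real.exp R ^ s := by
  refine Summable.of_nonneg_of_le (fun s => by positivity) (fun s => ?_)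
    ((hc (R + 1)).mul_left ‖μ‖)
  rw [norm_mul, norm_neg, norm_mul, norm_mul, hb, Complex.norm_natCast]
  have h1 : (s : ℝ) ≤ Real.exp 1 ^ s := by
    rw [← Real.exp_nat_mul, mul_one]
    have := Real.add_one_le_exp (s : ℝ)
    linarith
  calc ‖c s‖ * (‖μ‖ * 1 * s) * Real.exp R ^ s = ‖μ‖ * (‖c s‖ * (Real.exp R ^ s * s)) := by ring
    _ ≤ ‖μ‖ * (‖c s‖ * (Real.exp R ^ s * Real.exp 1 ^ s)) := by gcongr
    _ = ‖μ‖ * (‖c s‖ * Real.exp ((R + 1 : ℕ) : ℝ) ^ s) := by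
        rw [← mul_pow, ← Real.exp_add]; push_cast; rfl

lemma iterate_derivOp_tsum (μ : ℂ) {b : ℂ} (hb : ‖b‖ = 1) (p : ℕ) {c : ℕ → ℂ}
    (hc : ∀ R : ℕ, Summable fun s => ‖c s‖ * Real.exp R ^ s) :
    (derivOp μ)^[p] (fun z => ∑' s, c s * expMap b z ^ s) =
      fun z => ∑' s, c s * (-(μ * b * s)) ^ p * expMap b z ^ s := by
  induction p generalizing c with
  | zero => simp
  | succ p ih =>
    rw [Function.iterate_succ_apply, derivOp_tsum μ hb hc, ih (summable_mul_freq μ hb hc)]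
    simp only [pow_succ', mul_assoc]

/-! ### The spaces `M k` -/

/-- The frequencies `s` at which `(μ D) ^ n i`, `i ≤ k`, multiplies `exp (-s b z)` by a number of
modulus at most `exp s`. -/
def freqSet (μ : ℂ) (n : ℕ → ℕ) (k : ℕ) : Set ℕ :=
  {s | ∀ i ≤ k, (‖μ‖ * s) ^ n i ≤ Real.exp s}

lemma freqSet_succ_subset (μ : ℂ) (n : ℕ → ℕ) (k : ℕ) : freqSet μ n (k + 1) ⊆ freqSet μ n k :=
  fun _ hs i hi => hs i (hi.trans k.le_succ)

lemma infinite_freqSet (μ : ℂ) (n : ℕ → ℕ) (k : ℕ) : (freqSet μ n k).Infinite := by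
  have h : ∀ i, ∀ᶠ s : ℕ in atTop, (‖μ‖ * s) ^ n i ≤ Real.exp s := by
    intro i
    have h1 := ((Real.tendsto_pow_mul_exp_neg_atTop_nhds_zero (n i)).const_mul
      (‖μ‖ ^ n i)).comp tendsto_natCast_atTop_atTop
    rw [mul_zero] at h1
    filter_upwards [h1.eventually_le_const one_pos] with s hs
    rw [Function.comp_apply, Real.exp_neg, ← mul_assoc, ← mul_pow, ← div_eq_mul_inv,
      div_le_one (Real.exp_pos _)] at hs
    exact hs
  have h2 : ∀ᶠ s : ℕ in atTop, s ∈ freqSet μ n k := by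
    have := (finite_Iic k).eventually_all.2 fun i _ => h i
    filter_upwards [this] with s hs i hi using hs i hi
  exact Nat.frequently_atTop_iff_infinite.1 h2.frequently

/-- The functions `F (exp (-b z))` with `F` entire and all the Taylor coefficients of `F` at `0`
outside `S` equal to zero. -/
def specSubmodule (b : ℂ) (S : Set ℕ) : Submodule ℂ (ℂ → ℂ) where
  carrier := {f | ∃ F : ℂ → ℂ, Differentiable ℂ F ∧ (∀ s ∉ S, iteratedDeriv s F 0 = 0) ∧
    f = F ∘ expMap b}
  add_mem' := by
    rintro _ _ ⟨F, hF, hFS, rfl⟩ ⟨G, hG, hGS, rfl⟩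
    refine ⟨F + G, hF.add hG, fun s hs => ?_, rfl⟩
    rw [iteratedDeriv_add hF.contDiff.contDiffAt hG.contDiff.contDiffAt, hFS s hs, hGS s hs,
      add_zero]
  zero_mem' := ⟨0, differentiable_const 0, fun s _ => by simp, rfl⟩
  smul_mem' := by
    rintro c _ ⟨F, hF, hFS, rfl⟩
    refine ⟨c • F, hF.const_smul c, fun s hs => ?_, rfl⟩
    rw [iteratedDeriv_const_smul hF.contDiff.contDiffAt, hFS s hs, smul_zero]

lemma specSubmodule_mono (b : ℂ) {S T : Set ℕ} (h : S ⊆ T) :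
    specSubmodule b S ≤ specSubmodule b T := by
  rintro _ ⟨F, hF, hFS, rfl⟩
  exact ⟨F, hF, fun s hs => hFS s fun hs' => hs (h hs'), rfl⟩

lemma not_finiteDimensional_specSubmodule {b : ℂ} (hb : b ≠ 0) {S : Set ℕ} (hS : S.Infinite) :
    ¬ FiniteDimensional ℂ (specSubmodule b S) := by
  intro hfin
  have hmem : ∀ s : S, (fun z => expMap b z ^ (s : ℕ)) ∈ specSubmodule b S := fun s =>
    ⟨fun w => w ^ (s : ℕ), differentiable_pow _, fun t ht => by
      have hne : t ≠ s := fun h => ht (h ▸ s.2)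
      rw [iteratedDeriv_fun_pow_zero, if_neg hne, Nat.cast_zero], rfl⟩
  have hli : LinearIndependent ℂ fun s : S => (⟨_, hmem s⟩ : specSubmodule b S) :=
    LinearIndependent.of_comp (specSubmodule b S).subtype
      ((linearIndependent_expMap_pow hb).comp _ Subtype.val_injective)
  have := hS.to_subtype
  exact not_finite_iff_infinite.2 this hli.finite_of_isNoetherian

lemma tendsto_iteratedDeriv_zero {F : ℕ → ℂ → ℂ} {G : ℂ → ℂ} (hF : ∀ i, Differentiable ℂ (F i))
    (hG : Differentiable ℂ G) (h : TendstoUniformlyOn F G atTop (closedBall 0 1)) (s : ℕ) :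
    Tendsto (fun i => iteratedDeriv s (F i) 0) atTop (nhds (iteratedDeriv s G 0)) := by
  have hfac : (0 : ℝ) < s.factorial := by exact_mod_cast s.factorial_pos
  rw [Metric.tendsto_atTop]
  intro ε hε
  obtain ⟨N, hN⟩ := eventually_atTop.1
    (Metric.tendstoUniformlyOn_iff.1 h (ε / (2 * s.factorial)) (by positivity))
  refine ⟨N, fun i hi => ?_⟩
  have h1 := Complex.norm_iteratedDeriv_le_of_forall_mem_sphere_norm_le (c := 0) (R := 1)
    (f := F i - G) (C := ε / (2 * s.factorial)) s one_pos ((hF i).sub hG).diffContOnCl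
    (fun w hw => by
      have := hN i hi w (sphere_subset_closedBall hw)
      rw [dist_comm, dist_eq_norm] at this
      exact this.le)
  rw [iteratedDeriv_sub (hF i).contDiff.contDiffAt hG.contDiff.contDiffAt] at h1
  rw [dist_eq_norm]
  refine h1.trans_lt ?_
  rw [one_pow, div_one]
  have : (s.factorial : ℝ) * (ε / (2 * s.factorial)) = ε / 2 := by field_simp
  linarith

lemma closedH_specSubmodule {b : ℂ} (hb : ‖b‖ = 1) (S : Set ℕ) :
    ClosedH (specSubmodule b S : Set (ℂ → ℂ)) := by
  intro f g hf hg hlim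
  choose F hF hFS hfF using hf
  have hfd : ∀ i, Differentiable ℂ (f i) := fun i => by
    rw [hfF i]; exact (hF i).comp (differentiable_expMap b)
  have hcau : ∀ R : ℕ, UniformCauchySeqOn F atTop (closedBall 0 (Real.exp R)) := by
    intro R
    rw [Metric.uniformCauchySeqOn_iff]
    intro ε hε
    obtain ⟨N, hN⟩ := eventually_atTop.1
      ((hlim (R + 4) (by omega)).eventually_lt_const (half_pos hε))
    refine ⟨N, fun i hi k hk w hw => ?_⟩
    have h1 := norm_le_pnorm_comp_expMap hb ((hF i).sub (hF k)) (R := R) (by positivity)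
      (w := w) (by simpa using hw)
    have h2 : (F i - F k) ∘ expMap b = f i - f k := by rw [hfF i, hfF k]; rfl
    have h3 : pnorm ((R : ℝ) + 4) (f i - f k)
        ≤ pnorm ((R + 4 : ℕ) : ℝ) (f i - g) + pnorm ((R + 4 : ℕ) : ℝ) (f k - g) := by
      refine pnorm_le (by positivity) fun z hz => ?_
      have hz' : ‖z‖ ≤ ((R + 4 : ℕ) : ℝ) := by push_cast; exact hz
      have e : (f i - f k) z = (f i - g) z - (f k - g) z := by simp
      rw [e]
      exact (norm_sub_le _ _).trans (add_le_add (norm_le_pnorm ((hfd i).sub hg) hz')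
        (norm_le_pnorm ((hfd k).sub hg) hz'))
    rw [h2] at h1
    rw [dist_eq_norm]
    have h4 := hN i hi
    have h5 := hN k hk
    change ‖(F i - F k) w‖ < ε
    linarith
  have hR : ∀ w : ℂ, ∃ R : ℕ, ‖w‖ < Real.exp R := fun w => by
    obtain ⟨R, hR⟩ := exists_nat_gt ‖w‖
    exact ⟨R, by have := Real.add_one_le_exp (R : ℝ); linarith⟩
  have hpt : ∀ w, ∃ v, Tendsto (fun i => F i w) atTop (nhds v) := fun w => by
    obtain ⟨R, hw⟩ := hR w
    exact cauchySeq_tendsto_of_complete ((hcau R).cauchySeq (x := w) (by simpa using hw.le))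
  choose G hG using hpt
  have hunif : ∀ R : ℕ, TendstoUniformlyOn F G atTop (closedBall 0 (Real.exp R)) := fun R =>
    (hcau R).tendstoUniformlyOn_of_tendsto fun w _ => hG w
  have hGd : Differentiable ℂ G := by
    intro w
    obtain ⟨R, hw⟩ := hR w
    have h1 : TendstoLocallyUniformlyOn F G atTop (ball 0 (Real.exp R)) :=
      ((hunif R).mono ball_subset_closedBall).tendstoLocallyUniformlyOn
    exact (h1.differentiableOn (Eventually.of_forall fun i => (hF i).differentiableOn)
      isOpen_ball).differentiableAt (isOpen_ball.mem_nhds (by simpa using hw))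
  refine ⟨G, hGd, fun s hs => ?_, ?_⟩
  · have h1 := tendsto_iteratedDeriv_zero hF hGd (by simpa using hunif 0) s
    simp only [hFS _ s hs] at h1
    exact tendsto_nhds_unique h1 tendsto_const_nhds
  · funext z
    -- `f i z = F i (exp (-b z))` tends to both sides.
    refine tendsto_nhds_unique (f := fun i => f i z) (l := atTop) ?_ ?_
    · obtain ⟨j, hj⟩ := exists_nat_gt ‖z‖
      have hj1 : 1 ≤ j := by
        have : (0 : ℝ) < j := (norm_nonneg z).trans_lt hj
        exact_mod_cast this
      rw [tendsto_iff_norm_sub_tendsto_zero]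
      exact squeeze_zero (fun _ => norm_nonneg _)
        (fun i => norm_le_pnorm (f := f i - g) ((hfd i).sub hg) hj.le) (hlim j hj1)
    · simp only [hfF]
      exact hG (expMap b z)

/-! ### The two estimates -/

lemma iterate_translOp (a : ℂ) (f : ℂ → ℂ) (p : ℕ) (z : ℂ) :
    (translOp a)^[p] f z = f (z + p * a) := by
  induction p generalizing f with
  | zero => simp
  | succ p ih =>
    rw [Function.iterate_succ_apply, ih, translOp]
    congr 1
    push_cast
    ring

lemma pnorm_iterate_translOp_le {a b : ℂ} (hb : ‖b‖ = 1) (hab : b * a = (‖a‖ : ℂ)) {F : ℂ → ℂ}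
    (hF : Differentiable ℂ F) (p : ℕ) {j : ℝ} (hj : 0 ≤ j) :
    pnorm j ((translOp a)^[p] (F ∘ expMap b)) ≤ pnorm (j + 4) (F ∘ expMap b) := by
  refine pnorm_le hj fun z hz => ?_
  rw [iterate_translOp]
  refine norm_le_pnorm_comp_expMap hb hF hj ?_
  have h1 : expMap b (z + p * a) = expMap b z * Complex.exp ((-(p * ‖a‖) : ℝ) : ℂ) := by
    rw [expMap, expMap, ← Complex.exp_add]
    congr 1
    push_cast
    rw [← hab]
    ring
  rw [h1, norm_mul, Complex.norm_exp_ofReal]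
  calc ‖expMap b z‖ * Real.exp (-(p * ‖a‖)) ≤ Real.exp j * 1 := by
        gcongr
        · exact norm_expMap_le hb hz
        · exact Real.exp_le_one_iff.2 (neg_nonpos.2 (by positivity))
    _ = Real.exp j := mul_one _

lemma pnorm_iterate_derivOp_le (μ : ℂ) {b : ℂ} (hb : ‖b‖ = 1) {F : ℂ → ℂ}
    (hF : Differentiable ℂ F) (p : ℕ)
    (hp : ∀ s : ℕ, iteratedDeriv s F 0 ≠ 0 → (‖μ‖ * s) ^ p ≤ Real.exp s) {j : ℝ} (hj : 0 ≤ j) :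
    pnorm j ((derivOp μ)^[p] (F ∘ expMap b)) ≤ 2 * pnorm (j + 2 + 4) (F ∘ expMap b) := by
  rw [comp_expMap_eq_tsum b hF, iterate_derivOp_tsum μ hb p (summable_taylorCoeff hb hF),
    ← comp_expMap_eq_tsum b hF]
  refine pnorm_le hj fun z hz => ?_
  refine tsum_of_norm_bounded (hasSum_geometric_two.mul_right _) fun s => ?_
  have hP := pnorm_nonneg (j + 2 + 4) (F ∘ expMap b)
  by_cases hs : iteratedDeriv s F 0 = 0
  · simp only [taylorCoeff, hs, mul_zero, zero_mul, norm_zero]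
    positivity
  rw [norm_mul, norm_mul, norm_pow, norm_pow, norm_neg, norm_mul, norm_mul, hb,
    Complex.norm_natCast, mul_one]
  have hexp : Real.exp (s : ℝ) = Real.exp 1 ^ s := by rw [← Real.exp_nat_mul, mul_one]
  calc ‖taylorCoeff F s‖ * (‖μ‖ * s) ^ p * ‖expMap b z‖ ^ s
      ≤ ‖taylorCoeff F s‖ * Real.exp 1 ^ s * Real.exp j ^ s := by
        gcongr
        · exact hexp ▸ hp s hs
        · exact norm_expMap_le hb hz
    _ = ‖taylorCoeff F s‖ * Real.exp (j + 1) ^ s := by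
        rw [mul_assoc, ← mul_pow, ← Real.exp_add, add_comm 1 j]
    _ ≤ ‖taylorCoeff F s‖ * ((1 / 2) ^ s * Real.exp (j + 1 + 1) ^ s) := by
        gcongr; exact exp_pow_le _ _
    _ = (1 / 2) ^ s * (‖taylorCoeff F s‖ * Real.exp (j + 2) ^ s) := by
        rw [show j + 1 + 1 = j + 2 by ring]; ring
    _ ≤ (1 / 2) ^ s * pnorm (j + 2 + 4) (F ∘ expMap b) := by
        gcongr
        exact norm_taylorCoeff_mul_le_pnorm hb hF (by positivity) s

/-- Proposition 2.7: under the disjointness assumptions on the disks `D(-m_k a, k)`,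
there is a non-increasing sequence `(M_k)` of closed infinite-dimensional subspaces of
`H(ℂ)` together with continuous norms `q_j` such that `p_j((μD)^{n_k} f) ≤ q_j(f)` and
`p_j(T_a^{m_k} f) ≤ q_j(f)` for all `k ≥ j` and `f ∈ M_k`. -/
theorem stmt_5 (μ a : ℂ) (hμ : μ ≠ 0) (ha : a ≠ 0) (n m : ℕ → ℕ)
    (hn : StrictMono n) (hnpos : ∀ k, 1 ≤ k → 1 ≤ n k)
    (hm : StrictMono m) (hmpos : ∀ k, 1 ≤ k → 1 ≤ m k)
    (hm1 : 2 < (m 1 : ℝ) * ‖a‖)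
    (hdisj : ∀ j k : ℕ, 1 ≤ j → 1 ≤ k → j ≠ k →
      Disjoint (Metric.closedBall (-((m j : ℂ) * a)) (j : ℝ))
        (Metric.closedBall (-((m k : ℂ) * a)) (k : ℝ))) :
    ∃ M : ℕ → Submodule ℂ (ℂ → ℂ),
      (∀ k, 1 ≤ k → IsClosedInfDimSubspaceH (M k)) ∧
      (∀ k, 1 ≤ k → M (k + 1) ≤ M k) ∧
      ∀ j : ℕ, 1 ≤ j → ∃ q : (ℂ → ℂ) → ℝ, IsContinuousNormH q ∧
        ∀ k : ℕ, j ≤ k → ∀ f : ℂ → ℂ, f ∈ M k →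
          pnorm j ((derivOp μ)^[n k] f) ≤ q f ∧
          pnorm j ((translOp a)^[m k] f) ≤ q f := by
  -- The unimodular `b` with `b * a = ‖a‖`.
  obtain ⟨b, hb, hab⟩ : ∃ b : ℂ, ‖b‖ = 1 ∧ b * a = (‖a‖ : ℂ) := by
    have ha' : (‖a‖ : ℂ) ≠ 0 := by exact_mod_cast norm_ne_zero_iff.2 ha
    refine ⟨‖a‖ / a, ?_, div_mul_cancel₀ _ ha⟩
    rw [norm_div, Complex.norm_real, norm_norm, div_self (norm_ne_zero_iff.2 ha)]
  have hb0 : b ≠ 0 := by rw [← norm_ne_zero_iff, hb]; exact one_ne_zero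
  refine ⟨fun k => specSubmodule b (freqSet μ n k), fun k _ => ⟨?_, closedH_specSubmodule hb _,
    not_finiteDimensional_specSubmodule hb0 (infinite_freqSet μ n k)⟩,
    fun k _ => specSubmodule_mono b (freqSet_succ_subset μ n k), fun j _ =>
    ⟨_, isContinuousNormH_two_mul_pnorm (i := j + 6) (by omega), ?_⟩⟩
  · rintro _ ⟨F, hF, -, rfl⟩
    exact hF.comp (differentiable_expMap b)
  · rintro k - _ ⟨F, hF, hFS, rfl⟩
    have hj0 : (0 : ℝ) ≤ j := j.cast_nonneg
    have hcast : ((j + 6 : ℕ) : ℝ) = j + 2 + 4 := by push_cast; ring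
    simp only [hcast]
    constructor
    · refine pnorm_iterate_derivOp_le μ hb hF (n k) (fun s hs => ?_) hj0
      by_contra h
      exact hs (hFS s fun hs' => h (hs' k le_rfl))
    · refine (pnorm_iterate_translOp_le hb hab hF (m k) hj0).trans ?_
      have hmono : pnorm (j + 4) (F ∘ expMap b) ≤ pnorm (j + 2 + 4) (F ∘ expMap b) :=
        pnorm_le (by positivity) fun z hz =>
          norm_le_pnorm (hF.comp (differentiable_expMap b)) (by linarith)
      have := pnorm_nonneg (j + 2 + 4) (F ∘ expMap b)
      linarith
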